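/- arXiv:2412.08256 — 2 statements merged into one kernel-verified Lean document; each statement's English description precedes it below -/
import Mathlib

section
/- Let m = 2 and let K be a clique of G with |V(K)| ≥ 2. The inequality Σ_{e∈E(K)} z_e ≤ |V(K)| − 1 is valid for P_I(G, 2) (i.e., every feasible edge set I satisfies |I ∩ E(K)| ≤ |V(K)| − 1) and defines a facet of P_I(G, 2). -/
open Finset
open scoped Classical

noncomputable section

/-- `H` is an interval graph: each vertex can be assigned a nonempty closed real
interval such that two distinct vertices are adjacent iff their intervals intersect. -/
def IsIntervalGraph {W : Type*} (H : SimpleGraph W) : Prop :=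
  ∃ a b : W → ℝ, (∀ v, a v ≤ b v) ∧
    ∀ u v : W, u ≠ v →
      (H.Adj u v ↔ (Set.Icc (a u) (b u) ∩ Set.Icc (a v) (b v)).Nonempty)

/-- An edge set of `G` (given as a subgraph `H ≤ G`) is feasible if `(V, I)` is an
interval graph which is `m`-clique free (contains no clique of size `m+1`). -/
def FeasibleEdges {V : Type*} (G H : SimpleGraph V) (m : ℕ) : Prop :=
  H ≤ G ∧ IsIntervalGraph H ∧ H.CliqueFree (m + 1)

/-- The `m`-clique free interval subgraph polytope `P_I(G,m) ⊆ ℝ^E`: the convex hull of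
the incidence vectors of feasible edge sets. -/
def PI {V : Type*} [Fintype V] (G : SimpleGraph V) (m : ℕ) : Set (G.edgeSet → ℝ) :=
  convexHull ℝ
    {z | ∃ H : SimpleGraph V, FeasibleEdges G H m ∧
      ∀ e : G.edgeSet, z e = if (e : Sym2 V) ∈ H.edgeSet then 1 else 0}

/-- `E(K)`: the edges of `G` with both endpoints in `K`. -/
def cliqueEdges {V : Type*} [Fintype V] (G : SimpleGraph V) (K : Finset V) :
    Finset G.edgeSet :=
  Finset.filter (fun e : G.edgeSet => ∀ v ∈ (e : Sym2 V), v ∈ K) Finset.univ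

/-!
Validity: in a triangle-free interval graph, a vertex has at most one neighbour whose interval
starts no later than its own, since two such neighbours would both contain its starting point and
form a triangle with it. Adding the vertices of `K` by increasing left endpoint therefore adds at
most one edge each time, and none the first time.

Facet: a star with one extra edge, pendant or isolated, is feasible. Spanning trees of `K` of this
shape show that all edges of `K` agree modulo the direction `W` of the face, and adding an edge
outside `K` to a spanning star of `K` shows that this edge lies in `W`. Hence `W` contains the
kernel of the functional `z ↦ ∑ e ∈ E(K), z e`.
-/

theorem ker_le_of_sub_smul_mem {R M : Type*} [Ring R] [AddCommGroup M] [Module R M] {s : Set M}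
    (hs : Submodule.span R s = ⊤) {φ : Module.Dual R M} {w : M} {W : Submodule R M}
    (h : ∀ x ∈ s, x - φ x • w ∈ W) : LinearMap.ker φ ≤ W := by
  have htop : ⊤ ≤ W.comap (LinearMap.id - φ.smulRight w) := hs ▸ Submodule.span_le.2 h
  intro z hz
  simpa [LinearMap.mem_ker.1 hz] using htop (Submodule.mem_top (x := z))

section IntervalGraphs

variable {V : Type*} {H : SimpleGraph V}

theorem nonempty_Icc_inter_Icc_iff {α : Type*} [Lattice α] {a b c d : α} (hab : a ≤ b)
    (hcd : c ≤ d) : (Set.Icc a b ∩ Set.Icc c d).Nonempty ↔ a ≤ d ∧ c ≤ b := by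
  rw [Set.Icc_inter_Icc, Set.nonempty_Icc, sup_le_iff, le_inf_iff, le_inf_iff]
  tauto

theorem IsIntervalGraph.exists_subsingleton_adj_le (hH : IsIntervalGraph H)
    (hfree : H.CliqueFree 3) : ∃ a : V → ℝ, ∀ v, {x | H.Adj v x ∧ a x ≤ a v}.Subsingleton := by
  obtain ⟨a, b, hab, hadj⟩ := hH
  refine ⟨a, fun v x ⟨hvx, hx⟩ y ⟨hvy, hy⟩ ↦ by_contra fun hxy ↦ ?_⟩
  have hx' := ((nonempty_Icc_inter_Icc_iff (hab v) (hab x)).1 ((hadj v x hvx.ne).1 hvx)).1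
  have hy' := ((nonempty_Icc_inter_Icc_iff (hab v) (hab y)).1 ((hadj v y hvy.ne).1 hvy)).1
  have hxy_adj : H.Adj x y := (hadj x y hxy).2 ⟨a v, ⟨hx, hx'⟩, ⟨hy, hy'⟩⟩
  exact hfree {v, x, y} (SimpleGraph.is3Clique_iff.2 ⟨v, x, y, hvx, hvy, hxy_adj, rfl⟩)

theorem card_edges_insert_le (H : SimpleGraph V) (v : V) (K : Finset V) :
    #{e ∈ (insert v K).sym2 | e ∈ H.edgeSet} ≤
      #{x ∈ K | H.Adj v x} + #{e ∈ K.sym2 | e ∈ H.edgeSet} := by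
  have hnew : {e ∈ (insert v K).image fun x ↦ s(v, x) | e ∈ H.edgeSet} =
      {x ∈ K | H.Adj v x}.image fun x ↦ s(v, x) := by
    simp only [filter_image, filter_insert, SimpleGraph.mem_edgeSet, H.irrefl, if_false]
  rw [sym2_insert, filter_union, hnew]
  exact (card_union_le _ _).trans (Nat.add_le_add_right card_image_le _)

theorem card_edges_lt_card_of_subsingleton_adj_le {α : Type*} [LinearOrder α] {a : V → α}
    (ha : ∀ v, {x | H.Adj v x ∧ a x ≤ a v}.Subsingleton) (K : Finset V) (hK : K.Nonempty) :
    #{e ∈ K.sym2 | e ∈ H.edgeSet} < #K := by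
  induction K using Finset.induction_on_max_value a with
  | empty => exact absurd hK not_nonempty_empty
  | insert v s hv hmax ih =>
    have hnew : #{x ∈ s | H.Adj v x} ≤ 1 := by
      simp only [card_le_one, mem_filter]
      exact fun x hx y hy ↦ ha v ⟨hx.2, hmax x hx.1⟩ ⟨hy.2, hmax y hy.1⟩
    have hle := card_edges_insert_le H v s
    rw [card_insert_of_notMem hv]
    rcases s.eq_empty_or_nonempty with rfl | hs
    · simp
    · have := ih hs
      omega

theorem IsIntervalGraph.card_edges_lt_card (hH : IsIntervalGraph H) (hfree : H.CliqueFree 3)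
    {K : Finset V} (hK : K.Nonempty) : #{e ∈ K.sym2 | e ∈ H.edgeSet} < #K :=
  let ⟨_, ha⟩ := hH.exists_subsingleton_adj_le hfree
  card_edges_lt_card_of_subsingleton_adj_le ha K hK

end IntervalGraphs

section Stars

variable {V : Type*} {G : SimpleGraph V} {c u v : V} {L : Set V}

/-- The star with centre `c` and leaf set `L`, as a graph on all of `V` whose other vertices are
isolated. -/
def starOn (c : V) (L : Set V) : SimpleGraph V :=
  SimpleGraph.fromRel fun x y ↦ x = c ∧ y ∈ L

theorem starOn_adj {x y : V} :
    (starOn c L).Adj x y ↔ x ≠ y ∧ (x = c ∧ y ∈ L ∨ y = c ∧ x ∈ L) :=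
  Iff.rfl

theorem starOn_empty (c : V) : starOn c ∅ = ⊥ := by
  ext x y
  simp [starOn_adj]

theorem starOn_insert (c v : V) (L : Set V) :
    starOn c (insert v L) = starOn c L ⊔ SimpleGraph.edge c v := by
  ext x y
  simp only [starOn_adj, SimpleGraph.sup_adj, SimpleGraph.edge_adj, Set.mem_insert_iff]
  tauto

theorem starOn_le (hL : ∀ x ∈ L, G.Adj c x) : starOn c L ≤ G := by
  rintro x y ⟨-, ⟨rfl, hy⟩ | ⟨rfl, hx⟩⟩
  exacts [hL y hy, (hL x hx).symm]

theorem disjoint_starOn_edge (hvc : v ≠ c) (hvL : v ∉ L) :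
    Disjoint (starOn c L) (SimpleGraph.edge u v) := by
  rw [SimpleGraph.disjoint_left]
  intro x y
  rw [starOn_adj, SimpleGraph.edge_adj]
  grind

theorem isIntervalGraph_starOn_sup_edge [Countable V] (hvc : v ≠ c) (hvL : v ∉ L) :
    IsIntervalGraph (starOn c L ⊔ SimpleGraph.edge u v) := by
  obtain ⟨p, hp, hp0, hp1⟩ : ∃ p : V → ℝ, p.Injective ∧ (∀ x, 0 < p x) ∧ ∀ x, p x < 1 := by
    obtain ⟨f, hf⟩ := Countable.exists_injective_nat V
    have : Infinite (Set.Ioo (0 : ℝ) 1) := (Set.Ioo_infinite one_pos).to_subtype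
    let g := Infinite.natEmbedding (Set.Ioo (0 : ℝ) 1)
    exact ⟨fun x ↦ g (f x), Subtype.val_injective.comp (g.injective.comp hf),
      fun x ↦ (g (f x)).2.1, fun x ↦ (g (f x)).2.2⟩
  /- The centre is `[0, 1]`, its leaves are distinct points of `(0, 1)`, isolated vertices are
  distinct negative points, and `v` is the point `2`. The interval of `u` is extended to `2` if `u`
  is the centre, and is `[1, 2]` or the point `2` according to whether `u` is a leaf or not. -/
  let a : V → ℝ := fun x ↦
    if x = c then 0 else if x = v then 2 else
      if x = u then (if x ∈ L then 1 else 2) else if x ∈ L then p x else -p x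
  let b : V → ℝ := fun x ↦ if x = u then 2 else if x = c then 1 else a x
  have hab : ∀ x, a x ≤ b x := by grind
  refine ⟨a, b, hab, fun x y hxy ↦ ?_⟩
  rw [nonempty_Icc_inter_Icc_iff (hab x) (hab y), SimpleGraph.sup_adj, starOn_adj,
    SimpleGraph.edge_adj]
  have := hp.ne hxy
  have := hp0 x
  have := hp0 y
  have := hp1 x
  have := hp1 y
  by_cases x = c <;> by_cases y = c <;> by_cases x = v <;> by_cases y = v <;> grind

theorem cliqueFree_starOn_sup_edge (hvc : v ≠ c) (hvL : v ∉ L) :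
    (starOn c L ⊔ SimpleGraph.edge u v).CliqueFree 3 := by
  intro s hs
  obtain ⟨x, y, z, hxy, hxz, hyz, -⟩ := SimpleGraph.is3Clique_iff.1 hs
  simp only [SimpleGraph.sup_adj, starOn_adj, SimpleGraph.edge_adj] at hxy hxz hyz
  grind

theorem feasibleEdges_starOn_sup_edge [Countable V] {m : ℕ} (hm : 2 ≤ m) (hvc : v ≠ c)
    (hvL : v ∉ L) (hL : ∀ x ∈ L, G.Adj c x) (huv : SimpleGraph.edge u v ≤ G) :
    FeasibleEdges G (starOn c L ⊔ SimpleGraph.edge u v) m :=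
  ⟨sup_le (starOn_le hL) huv, isIntervalGraph_starOn_sup_edge hvc hvL,
    (cliqueFree_starOn_sup_edge hvc hvL).mono (by omega)⟩

end Stars

section IncidenceVectors

variable {V : Type*} {G : SimpleGraph V}

/-- The incidence vector in `ℝ^E` of the edge set of `H`, where `E` is the edge set of `G`; edges of
`H` outside `G` are ignored. -/
def incidenceVector (G H : SimpleGraph V) : G.edgeSet → ℝ :=
  fun e ↦ H.edgeSet.indicator 1 (e : Sym2 V)

theorem incidenceVector_bot (G : SimpleGraph V) : incidenceVector G ⊥ = 0 := by
  ext e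
  simp [incidenceVector]

theorem incidenceVector_sup {H₁ H₂ : SimpleGraph V} (h : Disjoint H₁ H₂) :
    incidenceVector G (H₁ ⊔ H₂) = incidenceVector G H₁ + incidenceVector G H₂ := by
  ext e
  simp only [incidenceVector, SimpleGraph.edgeSet_sup, Pi.add_apply,
    Set.indicator_union_of_disjoint (SimpleGraph.disjoint_edgeSet.2 h)]

theorem incidenceVector_edge {x y : V} (h : G.Adj x y) :
    incidenceVector G (SimpleGraph.edge x y) = Pi.single ⟨s(x, y), h⟩ 1 := by
  ext e
  simp [incidenceVector, SimpleGraph.edgeSet_edge_of_ne h.ne, Set.indicator_apply,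
    Pi.single_apply, Subtype.ext_iff]

theorem incidenceVector_starOn {c : V} {L : Finset V} (hc : c ∉ L) :
    incidenceVector G (starOn c L) = ∑ x ∈ L, incidenceVector G (SimpleGraph.edge c x) := by
  induction L using Finset.induction_on with
  | empty => simp [starOn_empty, incidenceVector_bot]
  | insert x L hx ih =>
    rw [mem_insert, not_or] at hc
    rw [coe_insert, starOn_insert, sum_insert hx, add_comm, ← ih hc.2,
      incidenceVector_sup (disjoint_starOn_edge (Ne.symm hc.1) (mod_cast hx))]

theorem incidenceVector_edge_sub_mem_vectorSpan {S : Set (G.edgeSet → ℝ)} {c u u' v : V}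
    {L : Set V} (hvc : v ≠ c) (hvL : v ∉ L)
    (hu : incidenceVector G (starOn c L ⊔ SimpleGraph.edge u v) ∈ S)
    (hu' : incidenceVector G (starOn c L ⊔ SimpleGraph.edge u' v) ∈ S) :
    incidenceVector G (SimpleGraph.edge u v) - incidenceVector G (SimpleGraph.edge u' v) ∈
      vectorSpan ℝ S := by
  have := vsub_mem_vectorSpan ℝ hu hu'
  rwa [incidenceVector_sup (disjoint_starOn_edge hvc hvL),
    incidenceVector_sup (disjoint_starOn_edge hvc hvL), vsub_eq_sub, add_sub_add_left_eq_sub]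
    at this

theorem span_incidenceVector_edge [Finite V] (G : SimpleGraph V) :
    Submodule.span ℝ {z | ∃ x y, G.Adj x y ∧ incidenceVector G (SimpleGraph.edge x y) = z} = ⊤ := by
  rw [eq_top_iff, ← (Pi.basisFun ℝ G.edgeSet).span_eq]
  refine Submodule.span_mono ?_
  rintro _ ⟨⟨e, he⟩, rfl⟩
  induction e with
  | _ x y => exact ⟨x, y, he, by rw [incidenceVector_edge he, Pi.basisFun_apply]⟩

theorem incidenceVector_mem_PI [Fintype V] {H : SimpleGraph V} {m : ℕ}
    (hH : FeasibleEdges G H m) : incidenceVector G H ∈ PI G m :=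
  subset_convexHull ℝ _ ⟨H, hH, fun _ ↦ Set.indicator_apply _ _ _⟩

theorem PI_subset_of_convex [Fintype V] {m : ℕ} {S : Set (G.edgeSet → ℝ)} (hS : Convex ℝ S)
    (h : ∀ H, FeasibleEdges G H m → incidenceVector G H ∈ S) : PI G m ⊆ S := by
  refine convexHull_min ?_ hS
  rintro z ⟨H, hH, hz⟩
  convert h H hH
  ext e
  rw [hz, incidenceVector, Set.indicator_apply, Pi.one_apply]

theorem vectorSpan_PI [Fintype V] (G : SimpleGraph V) {m : ℕ} (hm : 2 ≤ m) :
    vectorSpan ℝ (PI G m) = ⊤ := by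
  rw [eq_top_iff, ← span_incidenceVector_edge G, Submodule.span_le]
  rintro _ ⟨x, y, hxy, rfl⟩
  have hmem : ∀ u, SimpleGraph.edge u y ≤ G →
      incidenceVector G (SimpleGraph.edge u y) ∈ PI G m := by
    intro u hu
    have := feasibleEdges_starOn_sup_edge (L := ∅) hm hxy.ne' (Set.notMem_empty y)
      (fun _ h ↦ h.elim) hu
    rw [starOn_empty, bot_sup_eq] at this
    exact incidenceVector_mem_PI this
  have := vsub_mem_vectorSpan ℝ (hmem x ((SimpleGraph.edge_le_iff G).2 (.inr hxy)))
    (hmem y ((SimpleGraph.edge_le_iff G).2 (.inl rfl)))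
  rwa [SimpleGraph.edge_self_eq_bot, incidenceVector_bot, vsub_eq_sub, sub_zero] at this

end IncidenceVectors

section CliqueFace

variable {V : Type*} [Fintype V] {G : SimpleGraph V} {K : Finset V}

/-- The left-hand side `z ↦ ∑ e ∈ E(K), z e` of the clique inequality, as a linear functional. -/
def cliqueSum (G : SimpleGraph V) (K : Finset V) : Module.Dual ℝ (G.edgeSet → ℝ) where
  toFun z := ∑ e ∈ cliqueEdges G K, z e
  map_add' _ _ := sum_add_distrib
  map_smul' _ _ := (mul_sum _ _ _).symm

theorem cliqueSum_apply (z : G.edgeSet → ℝ) : cliqueSum G K z = ∑ e ∈ cliqueEdges G K, z e :=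
  rfl

/-- The face of `P_I(G, 2)` on which the clique inequality of `K` is tight. -/
def cliqueFace (G : SimpleGraph V) (K : Finset V) : Set (G.edgeSet → ℝ) :=
  {z ∈ PI G 2 | cliqueSum G K z = (K.card : ℝ) - 1}

theorem mk_mem_cliqueEdges {x y : V} (h : G.Adj x y) :
    ⟨s(x, y), h⟩ ∈ cliqueEdges G K ↔ x ∈ K ∧ y ∈ K := by
  simp [cliqueEdges]

theorem cliqueSum_incidenceVector_edge {x y : V} (h : G.Adj x y) :
    cliqueSum G K (incidenceVector G (SimpleGraph.edge x y)) = if x ∈ K ∧ y ∈ K then 1 else 0 := by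
  rw [cliqueSum_apply, incidenceVector_edge h, sum_pi_single']
  simp only [mk_mem_cliqueEdges]

theorem cliqueSum_incidenceVector_starOn (hK : G.IsClique K) {c : V} (hc : c ∈ K) {L : Finset V}
    (hL : L ⊆ K) (hcL : c ∉ L) : cliqueSum G K (incidenceVector G (starOn c L)) = #L := by
  have hedge : ∀ x ∈ L, cliqueSum G K (incidenceVector G (SimpleGraph.edge c x)) = 1 := by
    intro x hx
    rw [cliqueSum_incidenceVector_edge (hK hc (hL hx) (ne_of_mem_of_not_mem hx hcL).symm),
      if_pos ⟨hc, hL hx⟩]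
  rw [incidenceVector_starOn hcL, map_sum, sum_congr rfl hedge, sum_const, nsmul_one]

theorem cliqueSum_incidenceVector_le {H : SimpleGraph V} (hH : IsIntervalGraph H)
    (hfree : H.CliqueFree 3) (hK : K.Nonempty) :
    cliqueSum G K (incidenceVector G H) ≤ (#K : ℝ) - 1 := by
  have hcount : #{e ∈ cliqueEdges G K | ↑e ∈ H.edgeSet} ≤ #{e ∈ K.sym2 | e ∈ H.edgeSet} := by
    refine card_le_card_of_injOn Subtype.val (fun e he ↦ ?_) Subtype.val_injective.injOn
    simpa [cliqueEdges, mem_sym2_iff] using he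
  have hlt := hcount.trans_lt (hH.card_edges_lt_card hfree hK)
  simp only [cliqueSum_apply, incidenceVector, Set.indicator_apply, Pi.one_apply, sum_boole]
  rw [le_sub_iff_add_le]
  exact_mod_cast hlt

theorem cliqueSum_le_of_mem_PI_two (hK : K.Nonempty) {z : G.edgeSet → ℝ} (hz : z ∈ PI G 2) :
    cliqueSum G K z ≤ (#K : ℝ) - 1 :=
  PI_subset_of_convex (convex_halfSpace_le (cliqueSum G K).isLinear _)
    (fun _ hH ↦ cliqueSum_incidenceVector_le hH.2.1 hH.2.2 hK) hz

theorem incidenceVector_starOn_sup_edge_mem_cliqueFace (hK : G.IsClique K) {c u v : V} (hc : c ∈ K)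
    {L : Finset V} (hL : L ⊆ K) (hcL : c ∉ L) (hvc : v ≠ c) (hvL : v ∉ L)
    (huv : SimpleGraph.edge u v ≤ G)
    (hsum : #L + cliqueSum G K (incidenceVector G (SimpleGraph.edge u v)) = (#K : ℝ) - 1) :
    incidenceVector G (starOn c L ⊔ SimpleGraph.edge u v) ∈ cliqueFace G K := by
  refine ⟨incidenceVector_mem_PI <| feasibleEdges_starOn_sup_edge le_rfl hvc hvL
    (fun x hx ↦ hK hc (hL hx) (ne_of_mem_of_not_mem hx hcL).symm) huv, ?_⟩
  rw [incidenceVector_sup (disjoint_starOn_edge hvc hvL), map_add,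
    cliqueSum_incidenceVector_starOn hK hc hL hcL, hsum]

theorem incidenceVector_edge_mem_vectorSpan_cliqueFace (hK : G.IsClique K) (hne : K.Nonempty)
    {u v : V} (huv : G.Adj u v) (hv : v ∉ K) :
    incidenceVector G (SimpleGraph.edge u v) ∈ vectorSpan ℝ (cliqueFace G K) := by
  obtain ⟨c, hc⟩ := hne
  have hvc : v ≠ c := (ne_of_mem_of_not_mem hc hv).symm
  have hvL : v ∉ K.erase c := fun h ↦ hv (mem_of_mem_erase h)
  have hmem : ∀ w, SimpleGraph.edge w v ≤ G →
      cliqueSum G K (incidenceVector G (SimpleGraph.edge w v)) = 0 →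
      incidenceVector G (starOn c (K.erase c) ⊔ SimpleGraph.edge w v) ∈ cliqueFace G K :=
    fun w hw hw0 ↦ incidenceVector_starOn_sup_edge_mem_cliqueFace hK hc (erase_subset c K)
      (notMem_erase c K) hvc hvL hw (by rw [hw0, add_zero, cast_card_erase_of_mem hc])
  have hedge := hmem u ((SimpleGraph.edge_le_iff G).2 (.inr huv))
    (by rw [cliqueSum_incidenceVector_edge huv, if_neg fun h ↦ hv h.2])
  have hbot := hmem v ((SimpleGraph.edge_le_iff G).2 (.inl rfl))
    (by rw [SimpleGraph.edge_self_eq_bot, incidenceVector_bot, map_zero])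
  simpa only [SimpleGraph.edge_self_eq_bot, incidenceVector_bot, sub_zero] using
    incidenceVector_edge_sub_mem_vectorSpan hvc (mod_cast hvL) hedge hbot

theorem incidenceVector_edge_sub_mem_vectorSpan_cliqueFace_of_common (hK : G.IsClique K)
    {a b c : V} (ha : a ∈ K) (hb : b ∈ K) (hc : c ∈ K) (hba : b ≠ a) (hca : c ≠ a) :
    incidenceVector G (SimpleGraph.edge b a) - incidenceVector G (SimpleGraph.edge c a) ∈
      vectorSpan ℝ (cliqueFace G K) := by
  have hcK : a ∈ K.erase c := mem_erase.2 ⟨hca.symm, ha⟩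
  have haL : a ∉ (K.erase c).erase a := notMem_erase a _
  have hmem : ∀ w ∈ K, w ≠ a →
      incidenceVector G (starOn c ((K.erase c).erase a) ⊔ SimpleGraph.edge w a) ∈
        cliqueFace G K := by
    intro w hw hwa
    refine incidenceVector_starOn_sup_edge_mem_cliqueFace hK hc
      ((erase_subset _ _).trans (erase_subset _ _)) (by simp) hca.symm haL
      ((SimpleGraph.edge_le_iff G).2 (.inr (hK hw ha hwa))) ?_
    rw [cliqueSum_incidenceVector_edge (hK hw ha hwa), if_pos ⟨hw, ha⟩,
      cast_card_erase_of_mem hcK, cast_card_erase_of_mem hc, sub_add_cancel]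
  exact incidenceVector_edge_sub_mem_vectorSpan hca.symm (mod_cast haL) (hmem b hb hba)
    (hmem c hc hca)

theorem incidenceVector_edge_sub_mem_vectorSpan_cliqueFace (hK : G.IsClique K) {a b p q : V}
    (ha : a ∈ K) (hb : b ∈ K) (hp : p ∈ K) (hq : q ∈ K) (hab : a ≠ b) (hpq : p ≠ q) :
    incidenceVector G (SimpleGraph.edge a b) - incidenceVector G (SimpleGraph.edge p q) ∈
      vectorSpan ℝ (cliqueFace G K) := by
  by_cases hbp : b = p
  · subst hbp
    rw [SimpleGraph.edge_comm b q]
    exact incidenceVector_edge_sub_mem_vectorSpan_cliqueFace_of_common hK hb ha hq hab hpq.symm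
  · have hab_pb := incidenceVector_edge_sub_mem_vectorSpan_cliqueFace_of_common hK hb ha hp hab
      (Ne.symm hbp)
    have hbp_qp := incidenceVector_edge_sub_mem_vectorSpan_cliqueFace_of_common hK hp hb hq hbp
      hpq.symm
    rw [SimpleGraph.edge_comm b p, SimpleGraph.edge_comm q p] at hbp_qp
    simpa only [sub_add_sub_cancel] using Submodule.add_mem _ hab_pb hbp_qp

theorem vectorSpan_cliqueFace_le_ker :
    vectorSpan ℝ (cliqueFace G K) ≤ LinearMap.ker (cliqueSum G K) := by
  rw [vectorSpan_def, Submodule.span_le]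
  rintro _ ⟨x, hx, y, hy, rfl⟩
  simp only [vsub_eq_sub, SetLike.mem_coe, LinearMap.mem_ker, map_sub, hx.2, hy.2, sub_self]

theorem vectorSpan_cliqueFace (hK : G.IsClique K) (hK2 : 2 ≤ #K) :
    vectorSpan ℝ (cliqueFace G K) = LinearMap.ker (cliqueSum G K) := by
  obtain ⟨p, hp, q, hq, hpq⟩ := one_lt_card.1 hK2
  refine le_antisymm vectorSpan_cliqueFace_le_ker
    (ker_le_of_sub_smul_mem (span_incidenceVector_edge G)
      (w := incidenceVector G (SimpleGraph.edge p q)) ?_)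
  rintro _ ⟨x, y, hxy, rfl⟩
  rw [cliqueSum_incidenceVector_edge hxy]
  split_ifs with hxyK
  · rw [one_smul]
    exact incidenceVector_edge_sub_mem_vectorSpan_cliqueFace hK hxyK.1 hxyK.2 hp hq hxy.ne hpq
  · rw [zero_smul, sub_zero]
    by_cases hy : y ∈ K
    · rw [SimpleGraph.edge_comm]
      exact incidenceVector_edge_mem_vectorSpan_cliqueFace hK ⟨p, hp⟩ hxy.symm
        fun hx ↦ hxyK ⟨hx, hy⟩
    · exact incidenceVector_edge_mem_vectorSpan_cliqueFace hK ⟨p, hp⟩ hxy hy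

theorem cliqueSum_ne_zero (hK : G.IsClique K) (hK2 : 2 ≤ #K) : cliqueSum G K ≠ 0 := by
  obtain ⟨p, hp, q, hq, hpq⟩ := one_lt_card.1 hK2
  intro h0
  have hone := cliqueSum_incidenceVector_edge (K := K) (hK hp hq hpq)
  rw [h0, if_pos ⟨hp, hq⟩] at hone
  exact zero_ne_one hone

end CliqueFace

/-- **Proposition 4.2.1**: for `m = 2` and a clique `K` of `G`, the inequality
`Σ_{e ∈ E(K)} z_e ≤ |V(K)| - 1` is valid for `P_I(G,2)` and defines a facet of it. -/
theorem stmt_11 {V : Type*} [Fintype V] (G : SimpleGraph V)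
    (K : Finset V) (hK : G.IsClique ↑K) (hK2 : 2 ≤ K.card) :
    (∀ z ∈ PI G 2, ∑ e ∈ cliqueEdges G K, z e ≤ (K.card : ℝ) - 1) ∧
    Module.finrank ℝ
        (affineSpan ℝ
          {z ∈ PI G 2 | ∑ e ∈ cliqueEdges G K, z e = (K.card : ℝ) - 1}).direction + 1 =
      Module.finrank ℝ (affineSpan ℝ (PI G 2)).direction := by
  have hface : vectorSpan ℝ {z ∈ PI G 2 | ∑ e ∈ cliqueEdges G K, z e = (K.card : ℝ) - 1} =
      LinearMap.ker (cliqueSum G K) := vectorSpan_cliqueFace hK hK2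
  refine ⟨fun z ↦ cliqueSum_le_of_mem_PI_two (card_pos.1 (by omega)), ?_⟩
  rw [direction_affineSpan, direction_affineSpan, hface, vectorSpan_PI G le_rfl, finrank_top,
    Module.Dual.finrank_ker_add_one_of_ne_zero (cliqueSum_ne_zero hK hK2)]

end
end

section
/- Let ℓ_min be a valid lower bound, i.e., ℓ_min ≤ ℓ_opt(G, k). Let V_prep = { v ∈ V : ω_G(v) ≤ ℓ_min }, Ṽ = V ∖ V_prep and G̃ = G[Ṽ] the induced subgraph. Then ℓ_opt(G, k) = max{ ℓ_opt(G̃, k), ℓ_min }. Furthermore, every optimal interdiction policy W̃ ⊆ Ṽ for G̃ is also an optimal interdiction policy for G. -/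
open Finset
open scoped Classical

noncomputable section

/-- The clique number `ω(G)` of a graph: the maximum size of a set of pairwise adjacent
vertices. -/
def omega {W : Type*} (G : SimpleGraph W) : ℕ :=
  sSup {n | ∃ s : Finset W, G.IsNClique n s}

/-- `ω(G - W)`: the clique number of the subgraph of `G` induced on the complement of
`W`. -/
def omegaDel {W : Type*} (G : SimpleGraph W) (D : Finset W) : ℕ :=
  omega (G.induce ((↑D : Set W)ᶜ))

/-- `ℓ_opt(G,k)`: the optimal value of the maximum clique interdiction problem,
`min { ω(G - W) : W ⊆ V, |W| ≤ k }`. -/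
def lopt {W : Type*} (G : SimpleGraph W) (k : ℕ) : ℕ :=
  sInf {q | ∃ D : Finset W, D.card ≤ k ∧ q = omegaDel G D}

/-- `ω_G(v)`: the maximum size of a clique of `G` containing the vertex `v`. -/
def omegaAt {W : Type*} (G : SimpleGraph W) (v : W) : ℕ :=
  sSup {n | ∃ s : Finset W, G.IsNClique n s ∧ v ∈ s}

/-! A clique that meets `V_prep` has at most `ℓ_min` vertices, and any other clique lies in `G̃`.
Hence deleting `W̃ ⊆ Ṽ` from `G` leaves clique number at most `max (ω(G̃ - W̃)) ℓ_min`, while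
`ω(G̃ - (W ∩ Ṽ)) ≤ ω(G - W)` for every `W ⊆ V`. Minimising over policies gives both inequalities.
Bounds on these clique numbers are expressed by `CliqueFreeOn`, so that deletions from `G` and
from `G̃` both become subsets of `V`. -/

section Cliques

variable {V : Type*} {G : SimpleGraph V} {n : ℕ}

theorem cliqueFreeOn_induce_iff {s : Set V} {t : Set s} :
    (G.induce s).CliqueFreeOn t n ↔ G.CliqueFreeOn (Subtype.val '' t) n := by
  simp only [SimpleGraph.CliqueFreeOn, SimpleGraph.isNClique_induce_iff]
  constructor
  · intro h u hu
    obtain ⟨u', hu', rfl⟩ := subset_set_image_iff.1 hu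
    simpa only [map_eq_image, Function.Embedding.coe_subtype] using h hu'
  · intro h u hu
    exact h (by simpa only [coe_map, Function.Embedding.coe_subtype] using Set.image_mono hu)

theorem bddAbove_setOf_isNClique (hG : ∃ m, G.CliqueFree m) :
    BddAbove {n | ∃ t : Finset V, G.IsNClique n t} := by
  obtain ⟨m, hm⟩ := hG
  exact ⟨m, fun n ⟨t, ht⟩ => le_of_not_ge fun hmn => hm.mono hmn t ht⟩

theorem omega_le_iff (hG : ∃ m, G.CliqueFree m) : omega G ≤ n ↔ G.CliqueFree (n + 1) := by
  rw [omega, csSup_le_iff (bddAbove_setOf_isNClique hG) ⟨0, ∅, by simp⟩]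
  constructor
  · exact fun h t ht => (h _ ⟨t, ht⟩).not_gt n.lt_succ_self
  · exact fun h a ⟨t, ht⟩ => le_of_not_gt fun hna => h.mono hna t ht

theorem le_omegaAt (hG : ∃ m, G.CliqueFree m) {v : V} {t : Finset V} (ht : G.IsNClique n t)
    (hv : v ∈ t) : n ≤ omegaAt G v :=
  le_csSup ((bddAbove_setOf_isNClique hG).mono (by rintro _ ⟨u, hu, -⟩; exact ⟨u, hu⟩)) ⟨t, ht, hv⟩

theorem exists_cliqueFree_induce (hG : ∃ m, G.CliqueFree m) (s : Set V) :
    ∃ m, (G.induce s).CliqueFree m :=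
  hG.imp fun _ hm => (G.cliqueFree_induce_iff s _).2 hm.cliqueFreeOn

theorem omegaDel_le_iff (hG : ∃ m, G.CliqueFree m) {D : Finset V} :
    omegaDel G D ≤ n ↔ G.CliqueFreeOn (↑D)ᶜ (n + 1) := by
  rw [omegaDel, omega_le_iff (exists_cliqueFree_induce hG _), G.cliqueFree_induce_iff]

theorem omegaDel_induce_le_iff (hG : ∃ m, G.CliqueFree m) {s : Set V} {D : Finset s} :
    omegaDel (G.induce s) D ≤ n ↔ G.CliqueFreeOn (Subtype.val '' (↑D : Set s)ᶜ) (n + 1) := by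
  rw [omegaDel_le_iff (exists_cliqueFree_induce hG s), cliqueFreeOn_induce_iff]

end Cliques

section Interdiction

variable {V : Type*} {G : SimpleGraph V} {k l : ℕ} {s : Set V}

theorem lopt_le_omegaDel {D : Finset V} (hD : D.card ≤ k) : lopt G k ≤ omegaDel G D :=
  Nat.sInf_le ⟨D, hD, rfl⟩

theorem exists_lopt_eq_omegaDel (G : SimpleGraph V) (k : ℕ) :
    ∃ D : Finset V, D.card ≤ k ∧ lopt G k = omegaDel G D :=
  Nat.sInf_mem (s := {q | ∃ D : Finset V, D.card ≤ k ∧ q = omegaDel G D})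
    ⟨_, ∅, by simp, rfl⟩

theorem omegaDel_induce_subtype_le (hG : ∃ m, G.CliqueFree m) (s : Set V) (D : Finset V) :
    omegaDel (G.induce s) (D.subtype (· ∈ s)) ≤ omegaDel G D := by
  have hsub : Subtype.val '' (↑(D.subtype (· ∈ s)) : Set s)ᶜ ⊆ (↑D : Set V)ᶜ := by
    rintro _ ⟨v, hv, rfl⟩ hvD
    exact hv (mem_coe.2 (mem_subtype.2 hvD))
  exact (omegaDel_induce_le_iff hG).2 (.subset G hsub ((omegaDel_le_iff hG).1 le_rfl))

theorem lopt_induce_le (hG : ∃ m, G.CliqueFree m) (s : Set V) (k : ℕ) :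
    lopt (G.induce s) k ≤ lopt G k := by
  obtain ⟨D, hD, hopt⟩ := exists_lopt_eq_omegaDel G k
  have hcard : (D.subtype (· ∈ s)).card ≤ k :=
    (card_subtype _ D).trans_le ((card_filter_le _ _).trans hD)
  calc
    lopt (G.induce s) k ≤ omegaDel (G.induce s) (D.subtype (· ∈ s)) := lopt_le_omegaDel hcard
    _ ≤ omegaDel G D := omegaDel_induce_subtype_le hG s D
    _ = lopt G k := hopt.symm

theorem omegaDel_image_val_le_max (hG : ∃ m, G.CliqueFree m)
    (hs : ∀ v ∉ s, omegaAt G v ≤ l) (D : Finset s) :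
    omegaDel G (D.image Subtype.val) ≤ max (omegaDel (G.induce s) D) l := by
  refine (omegaDel_le_iff hG).2 fun t htD ht => ?_
  have hts : ∀ v ∈ t, v ∈ s := by
    intro v hvt
    by_contra hvs
    have hle := (le_omegaAt hG ht hvt).trans (hs v hvs)
    omega
  have ht_avoids : (↑t : Set V) ⊆ Subtype.val '' (↑D : Set s)ᶜ := fun v hvt =>
    ⟨⟨v, hts v hvt⟩, fun hvD => htD hvt (mem_image_of_mem _ hvD), rfl⟩
  exact (omegaDel_induce_le_iff hG).1 (le_max_left _ l) ht_avoids ht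

theorem lopt_eq_max_lopt_induce (hG : ∃ m, G.CliqueFree m) (hl : l ≤ lopt G k)
    (hs : ∀ v ∉ s, omegaAt G v ≤ l) : lopt G k = max (lopt (G.induce s) k) l := by
  refine le_antisymm ?_ (max_le (lopt_induce_le hG s k) hl)
  obtain ⟨D, hD, hopt⟩ := exists_lopt_eq_omegaDel (G.induce s) k
  calc
    lopt G k ≤ omegaDel G (D.image Subtype.val) := lopt_le_omegaDel (card_image_le.trans hD)
    _ ≤ max (omegaDel (G.induce s) D) l := omegaDel_image_val_le_max hG hs D
    _ = max (lopt (G.induce s) k) l := by rw [hopt]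

end Interdiction

theorem stmt_16_general {V : Type*} (G : SimpleGraph V) (hG : ∃ m, G.CliqueFree m) (k lmin : ℕ)
    (hlb : lmin ≤ lopt G k) (Vt : Set V) (hVt : ∀ v ∉ Vt, omegaAt G v ≤ lmin) :
    lopt G k = max (lopt (G.induce Vt) k) lmin ∧
      ∀ Wt : Finset Vt, Wt.card ≤ k →
        omegaDel (G.induce Vt) Wt = lopt (G.induce Vt) k →
          (Wt.image Subtype.val).card ≤ k ∧
            omegaDel G (Wt.image Subtype.val) = lopt G k := by
  have hmax := lopt_eq_max_lopt_induce hG hlb hVt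
  refine ⟨hmax, fun Wt hWt hopt => ?_⟩
  have hcard : (Wt.image Subtype.val).card ≤ k := card_image_le.trans hWt
  refine ⟨hcard, le_antisymm ?_ (lopt_le_omegaDel hcard)⟩
  rw [hmax, ← hopt]
  exact omegaDel_image_val_le_max hG hVt Wt

/-- **Proposition 5.2.4** (preprocessing): let `ℓ_min ≤ ℓ_opt(G,k)`,
`V_prep = {v : ω_G(v) ≤ ℓ_min}`, `Ṽ = V ∖ V_prep` and `G̃ = G[Ṽ]`. Then
`ℓ_opt(G,k) = max(ℓ_opt(G̃,k), ℓ_min)`, and every optimal interdiction policy for `G̃`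
is (via the inclusion `Ṽ ⊆ V`) also an optimal interdiction policy for `G`. -/
theorem stmt_16 {V : Type*} [Fintype V] (G : SimpleGraph V) (k : ℕ) (hk : 0 < k)
    (lmin : ℕ) (hlb : lmin ≤ lopt G k) :
    ∀ Vt : Set V, Vt = {v : V | ¬ omegaAt G v ≤ lmin} →
      (lopt G k = max (lopt (G.induce Vt) k) lmin ∧
        ∀ Wt : Finset Vt, Wt.card ≤ k →
          omegaDel (G.induce Vt) Wt = lopt (G.induce Vt) k →
            (Wt.image Subtype.val).card ≤ k ∧
              omegaDel G (Wt.image Subtype.val) = lopt G k) := by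
  rintro Vt rfl
  exact stmt_16_general G ⟨_, G.cliqueFree_of_card_lt (Nat.lt_succ_self _)⟩ k lmin hlb _
    fun _ hv => not_not.1 hv

end
end
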